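/- For every non-negative integer m and every real ε > 0 there exists t₀ such that for every even integer t ≥ t₀ the following holds. Let V ⊆ 𝔽₂^t be the set of vectors of even Hamming weight and let G₀ be the simple graph on V in which distinct u, v are adjacent iff u · v = 1. Then for a fixed t-element set S, the number of m-tuples (f₁, …, f_m) of functions from S to V such that the image fᵢ(S) is an independent set of G₀ for every i ∈ {1, …, m} is at most 2^{(−3m/8 + ε)·t²} · |V|^{m·t}, where |V| = 2^{t−1}. -/

import Mathlib

/-!
Even-weight vectors are self-orthogonal over `𝔽₂`, so a map into `V` with independent image is a
family of pairwise orthogonal vectors for the dot product. Reveal such a family one vector at a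
time, keeping track of the span `W` of the vectors seen so far. The next vector either lies in `W`,
or lies in `Wᗮ` and raises `dim W` by one. While `dim W < t / 2`, the first case has at most
`2 ^ (t / 2)` choices, and the second has `2 ^ (t - dim W)` choices but can occur only once for each
value of `dim W`. When `dim W` is about `t / 2`, every choice lies in `Wᗮ`, which has about
`2 ^ (t / 2)` elements. Hence there are at most `2 ^ (t² / 2 + t² / 8 + O(t))` families.
-/

open Submodule Module
open LinearMap (BilinForm)

section OrthogonalTuples

variable {R M : Type*} [CommRing R] [AddCommGroup M] [Module R M]

/-- The `k`-tuples of vectors that are orthogonal to `W` and to each other. Orthogonality of two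
entries is required in increasing order of indices only, as `B` need not be symmetric. -/
def orthogonalTuples (B : BilinForm R M) (k : ℕ) (W : Submodule R M) : Set (Fin k → M) :=
  {f | (∀ i, f i ∈ B.orthogonal W) ∧ ∀ i j, i < j → B (f i) (f j) = 0}

variable (B : BilinForm R M) (k : ℕ) (W : Submodule R M)

lemma mem_orthogonal_sup_span_singleton {v w : M} :
    w ∈ B.orthogonal (W ⊔ span R {v}) ↔ w ∈ B.orthogonal W ∧ B v w = 0 := by
  refine ⟨fun h => ⟨BilinForm.orthogonal_le le_sup_left h,
    h v (mem_sup_right (mem_span_singleton_self v))⟩, fun ⟨hW, hv⟩ => ?_⟩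
  have h : W ⊔ span R {v} ≤ LinearMap.ker (B.flip w) :=
    sup_le hW ((span_singleton_le_iff_mem _ _).2 hv)
  exact fun u hu => h hu

lemma cons_mem_orthogonalTuples {v : M} {f : Fin k → M} :
    (Fin.cons v f : Fin (k + 1) → M) ∈ orthogonalTuples B (k + 1) W ↔
      v ∈ B.orthogonal W ∧ f ∈ orthogonalTuples B k (W ⊔ span R {v}) := by
  simp only [orthogonalTuples, Set.mem_ofPred_eq, Fin.forall_fin_succ, Fin.cons_zero, Fin.cons_succ,
    Fin.succ_lt_succ_iff, Fin.succ_pos, Fin.not_lt_zero, forall_const, IsEmpty.forall_iff,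
    true_and, mem_orthogonal_sup_span_singleton, forall_and, and_assoc]

/-- Splitting off the first vector of a tuple, which joins the subspace constraining the others. -/
def orthogonalTuplesSuccEquiv : orthogonalTuples B (k + 1) W ≃
    Σ v : B.orthogonal W, orthogonalTuples B k (W ⊔ span R {(v : M)}) where
  toFun f :=
    have hf := (cons_mem_orthogonalTuples B k W).1 ((Fin.cons_self_tail f.1).symm ▸ f.2)
    ⟨⟨f.1 0, hf.1⟩, ⟨Fin.tail f.1, hf.2⟩⟩
  invFun p := ⟨Fin.cons p.1 p.2.1, (cons_mem_orthogonalTuples B k W).2 ⟨p.1.2, p.2.2⟩⟩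
  left_inv f := Subtype.ext (Fin.cons_self_tail f.1)
  right_inv _ := rfl

variable [Finite M]

lemma natCard_orthogonalTuples_le_pow :
    Nat.card (orthogonalTuples B k W) ≤ Nat.card (B.orthogonal W) ^ k := by
  rw [← Nat.card_fin k, ← Nat.card_fun, Nat.card_fin]
  refine Nat.card_le_card_of_injective (fun f i => ⟨f.1 i, f.2.1 i⟩) fun f g h => Subtype.ext ?_
  exact funext fun i => congrArg Subtype.val (congrFun h i)

lemma natCard_orthogonalTuples_succ_le {b c : ℕ}
    (hb : Nat.card (orthogonalTuples B k W) ≤ b)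
    (hc : ∀ v ∉ W, Nat.card (orthogonalTuples B k (W ⊔ span R {v})) ≤ c) :
    Nat.card (orthogonalTuples B (k + 1) W) ≤ Nat.card W * b + Nat.card (B.orthogonal W) * c := by
  classical
  have := Fintype.ofFinite M
  have hsplit (v : M) : Nat.card (orthogonalTuples B k (W ⊔ span R {v})) ≤
      (if v ∈ W then b else 0) + c := by
    split_ifs with hv
    · rw [sup_eq_left.2 ((span_singleton_le_iff_mem _ _).2 hv)]
      exact hb.trans (Nat.le_add_right b c)
    · simpa only [zero_add] using hc v hv
  have hmem : (Finset.univ.filter fun v : B.orthogonal W => (v : M) ∈ W).card ≤ Nat.card W := by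
    rw [← Fintype.card_subtype, ← Nat.card_eq_fintype_card]
    exact Nat.card_le_card_of_injective (fun v => ⟨v.1, v.2⟩) fun v w h =>
      Subtype.ext (Subtype.ext (congrArg (fun u : W => (u : M)) h))
  calc Nat.card (orthogonalTuples B (k + 1) W)
      = ∑ v : B.orthogonal W, Nat.card (orthogonalTuples B k (W ⊔ span R {(v : M)})) := by
        rw [Nat.card_congr (orthogonalTuplesSuccEquiv B k W), Nat.card_sigma]
    _ ≤ ∑ v : B.orthogonal W, ((if (v : M) ∈ W then b else 0) + c) :=
        Finset.sum_le_sum fun v _ => hsplit v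
    _ = (Finset.univ.filter fun v : B.orthogonal W => (v : M) ∈ W).card * b +
          Nat.card (B.orthogonal W) * c := by
        rw [Finset.sum_add_distrib, ← Finset.sum_filter, Finset.sum_const, Finset.sum_const,
          Finset.card_univ, ← Nat.card_eq_fintype_card, smul_eq_mul, smul_eq_mul]
    _ ≤ Nat.card W * b + Nat.card (B.orthogonal W) * c := by gcongr

end OrthogonalTuples

section FiniteField

variable {K E : Type*} [Field K] [Finite K] [AddCommGroup E] [Module K E] [FiniteDimensional K E]
  {B : BilinForm K E} {n : ℕ}

lemma natCard_orthogonal_le (hB : B.Nondegenerate) (hn : finrank K E ≤ 2 * n)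
    {W : Submodule K E} {d : ℕ} (hW : finrank K W + d = n) :
    Nat.card (B.orthogonal W) ≤ Nat.card K ^ (n + d) := by
  rw [natCard_eq_pow_finrank (K := K), BilinForm.finrank_orthogonal hB]
  exact Nat.pow_le_pow_right Nat.card_pos (by lia)

lemma natCard_orthogonalTuples_le (hB : B.Nondegenerate) (hn : finrank K E ≤ 2 * n)
    (k : ℕ) {W : Submodule K E} {d : ℕ} (hW : finrank K W + d = n) :
    Nat.card (orthogonalTuples B k W) ≤
      2 ^ k * Nat.card K ^ (n * k + (d + 1).choose 2) := by
  have : Finite E := Module.finite_of_finite K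
  have hq : 0 < Nat.card K := Nat.card_pos
  induction k generalizing d W with
  | zero =>
    simpa using (natCard_orthogonalTuples_le_pow B 0 W).trans (Nat.pow_pos hq)
  | succ k ih =>
    obtain _ | d := d
    · calc Nat.card (orthogonalTuples B (k + 1) W)
          ≤ Nat.card (B.orthogonal W) ^ (k + 1) := natCard_orthogonalTuples_le_pow B (k + 1) W
        _ ≤ (Nat.card K ^ n) ^ (k + 1) :=
            Nat.pow_le_pow_left (natCard_orthogonal_le hB hn hW) (k + 1)
        _ = Nat.card K ^ (n * (k + 1)) := (pow_mul _ _ _).symm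
        _ ≤ 2 ^ (k + 1) * Nat.card K ^ (n * (k + 1)) :=
            Nat.le_mul_of_pos_left _ (Nat.two_pow_pos _)
    · have hchoose : (d + 2).choose 2 = (d + 1) + (d + 1).choose 2 := by
        rw [Nat.choose_succ_succ' (d + 1) 1, Nat.choose_one_right]
      have hcardW : Nat.card W ≤ Nat.card K ^ n := by
        rw [natCard_eq_pow_finrank (K := K)]
        exact Nat.pow_le_pow_right hq (by lia)
      have hnotMem (v : E) (hv : v ∉ W) : Nat.card (orthogonalTuples B k (W ⊔ span K {v})) ≤
          2 ^ k * Nat.card K ^ (n * k + (d + 1).choose 2) :=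
        ih (by rw [finrank_sup_span_singleton hv]; lia)
      calc Nat.card (orthogonalTuples B (k + 1) W)
          ≤ Nat.card W * (2 ^ k * Nat.card K ^ (n * k + (d + 2).choose 2)) +
              Nat.card (B.orthogonal W) * (2 ^ k * Nat.card K ^ (n * k + (d + 1).choose 2)) :=
            natCard_orthogonalTuples_succ_le B k W (ih hW) hnotMem
        _ ≤ Nat.card K ^ n * (2 ^ k * Nat.card K ^ (n * k + (d + 2).choose 2)) +
              Nat.card K ^ (n + (d + 1)) *
                (2 ^ k * Nat.card K ^ (n * k + (d + 1).choose 2)) := by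
            gcongr
            exact natCard_orthogonal_le hB hn hW
        _ = 2 ^ (k + 1) * Nat.card K ^ (n * (k + 1) + (d + 2).choose 2) := by
            rw [hchoose]
            ring

lemma natCard_iIsOrtho_le (hB : B.Nondegenerate) (hn : finrank K E ≤ 2 * n)
    (S : Type*) [Finite S] :
    Nat.card {f : S → E // B.iIsOrtho f} ≤
      2 ^ Nat.card S * Nat.card K ^ (n * Nat.card S + (n + 1).choose 2) := by
  have : Finite E := Module.finite_of_finite K
  let e : Fin (Nat.card S) ≃ S := (Finite.equivFin S).symm
  refine le_trans ?_ (natCard_orthogonalTuples_le hB hn (Nat.card S) (W := ⊥) (by simp))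
  refine Nat.card_le_card_of_injective (fun f => ⟨f.1 ∘ e, fun i => ?_, fun i j hij => ?_⟩)
    fun f g h => Subtype.ext (e.surjective.injective_comp_right (congrArg Subtype.val h))
  · simp only [BilinForm.orthogonal_bot, mem_top]
  · exact f.2 (e.injective.ne hij.ne)

end FiniteField

section EvenWeight

variable {ι S : Type*} [Fintype ι]

variable (ι) in
/-- The vertex set `V` of `G₀`: the vectors of even Hamming weight, coordinates indexed by `ι`. -/
abbrev EvenWeightVector : Type _ :=
  {v : ι → ZMod 2 // Even (Finset.univ.filter (fun i => v i ≠ 0)).card}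

/-- The image of `f` is an independent set of the graph `G₀`, in which distinct vectors are adjacent
iff their scalar product is `1`. -/
abbrev HasIndependentImage (f : S → EvenWeightVector ι) : Prop :=
  ∀ x y : S, f x ≠ f y → ∑ k, (f x : ι → ZMod 2) k * (f y : ι → ZMod 2) k ≠ 1

lemma EvenWeightVector.sum_mul_self (v : EvenWeightVector ι) : ∑ k, v.1 k * v.1 k = 0 := by
  have hsq : ∀ a : ZMod 2, a * a = if a ≠ 0 then 1 else 0 := by decide
  simp_rw [hsq]
  rw [Finset.sum_boole]
  exact v.2.natCast_zmod_two

lemma HasIndependentImage.sum_mul_eq_zero {f : S → EvenWeightVector ι}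
    (hf : HasIndependentImage f) (x y : S) : ∑ k, (f x).1 k * (f y).1 k = 0 := by
  by_cases hxy : f x = f y
  · rw [hxy, EvenWeightVector.sum_mul_self]
  · have hdich : ∀ a : ZMod 2, a ≠ 1 → a = 0 := by decide
    exact hdich _ (hf x y hxy)

lemma nondegenerate_dotProductBilin (R : Type*) [CommRing R] :
    (dotProductBilin R R : BilinForm R (ι → R)).Nondegenerate :=
  ⟨fun v h => dotProduct_eq_zero v h,
    fun v h => dotProduct_eq_zero v fun w => (dotProduct_comm v w).trans (h w)⟩

lemma natCard_hasIndependentImage_le [Finite S] {n : ℕ} (hn : Fintype.card ι ≤ 2 * n) :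
    Nat.card {f : S → EvenWeightVector ι // HasIndependentImage f} ≤
      2 ^ (Nat.card S + n * Nat.card S + (n + 1).choose 2) := by
  let B : BilinForm (ZMod 2) (ι → ZMod 2) := dotProductBilin (ZMod 2) (ZMod 2)
  calc Nat.card {f : S → EvenWeightVector ι // HasIndependentImage f}
      ≤ Nat.card {f : S → ι → ZMod 2 // B.iIsOrtho f} :=
        Nat.card_le_card_of_injective
          (fun f => ⟨fun x => (f.1 x).1, fun x y _ => f.2.sum_mul_eq_zero x y⟩) fun f g h =>
            Subtype.ext (funext fun x => Subtype.ext (congrFun (congrArg Subtype.val h) x))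
    _ ≤ 2 ^ Nat.card S * Nat.card (ZMod 2) ^ (n * Nat.card S + (n + 1).choose 2) :=
        natCard_iIsOrtho_le (nondegenerate_dotProductBilin (ZMod 2)) (by simpa using hn) S
    _ = 2 ^ (Nat.card S + n * Nat.card S + (n + 1).choose 2) := by
        rw [Nat.card_zmod, ← pow_add, add_assoc]

end EvenWeight

lemma natCard_subtype_forall {ι α : Type*} [Finite ι] (p : α → Prop) :
    Nat.card {f : ι → α // ∀ i, p (f i)} = Nat.card {a // p a} ^ Nat.card ι := by
  rw [Nat.card_congr (Equiv.subtypePiEquivPi (p := fun _ => p)), Nat.card_fun]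

lemma add_mul_add_choose_two_le {t n : ℕ} (hn : 2 * n ≤ t + 1) :
    ((t + n * t + (n + 1).choose 2 : ℕ) : ℝ) ≤ 5 / 8 * t ^ 2 + 3 * t := by
  have hn' : (2 * n : ℝ) ≤ t + 1 := mod_cast hn
  have hnt : (n : ℝ) ≤ t := mod_cast (by lia : n ≤ t)
  push_cast [Nat.cast_choose_two]
  nlinarith

theorem count_tuples_with_independent_images_general (m : ℕ) (ε : ℝ) (hε : 0 < ε) :
    ∃ t₀ : ℕ, ∀ t : ℕ, t₀ ≤ t →
      ∀ (S : Type*) [Fintype S], Fintype.card S = t →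
        (Nat.card
            {f : Fin m → S → {v : Fin t → ZMod 2 //
                Even (Finset.univ.filter (fun i => v i ≠ 0)).card} //
              ∀ i : Fin m, ∀ x y : S, f i x ≠ f i y →
                ∑ k, (f i x : Fin t → ZMod 2) k * (f i y : Fin t → ZMod 2) k ≠ 1} : ℝ)
          ≤ (2 : ℝ) ^ ((-(3 * m : ℝ) / 8 + ε) * t ^ 2) *
              ((2 : ℝ) ^ ((t : ℝ) - 1)) ^ (m * t) := by
  obtain ⟨t₀, ht₀⟩ := exists_nat_ge (4 * m / ε)
  refine ⟨t₀, fun t ht S _ hS => ?_⟩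
  obtain ⟨n, htn, hnt⟩ : ∃ n, t ≤ 2 * n ∧ 2 * n ≤ t + 1 := ⟨(t + 1) / 2, by lia, by lia⟩
  have hlarge : 4 * (m : ℝ) ≤ t * ε :=
    (div_le_iff₀ hε).1 (ht₀.trans (Nat.cast_le.2 ht))
  have hcount := natCard_hasIndependentImage_le (ι := Fin t) (S := S) (by simpa using htn)
  rw [Nat.card_eq_fintype_card (α := S), hS] at hcount
  rw [natCard_subtype_forall (fun f : S → EvenWeightVector (Fin t) => HasIndependentImage f),
    Nat.card_fin]
  set N := t + n * t + (n + 1).choose 2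
  calc ((Nat.card {f : S → EvenWeightVector (Fin t) // HasIndependentImage f} ^ m : ℕ) : ℝ)
      ≤ ((2 ^ N) ^ m : ℕ) := Nat.cast_le.2 (Nat.pow_le_pow_left hcount m)
    _ = (2 : ℝ) ^ ((N : ℝ) * m) := by
        rw [Real.rpow_mul_natCast two_pos.le, Real.rpow_natCast]
        norm_cast
    _ ≤ (2 : ℝ) ^ ((-(3 * m : ℝ) / 8 + ε) * t ^ 2 + ((t : ℝ) - 1) * (m * t : ℕ)) := by
        refine Real.rpow_le_rpow_of_exponent_le one_le_two ?_
        have hN := mul_le_mul_of_nonneg_right (add_mul_add_choose_two_le hnt) m.cast_nonneg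
        have hmt := mul_le_mul_of_nonneg_right hlarge t.cast_nonneg
        push_cast at hmt ⊢
        linarith
    _ = (2 : ℝ) ^ ((-(3 * m : ℝ) / 8 + ε) * t ^ 2) * ((2 : ℝ) ^ ((t : ℝ) - 1)) ^ (m * t) := by
        rw [Real.rpow_add two_pos, Real.rpow_mul_natCast two_pos.le]

/-- For every non-negative integer `m` and every `ε > 0` there is `t₀` such that for every
even `t ≥ t₀` and every fixed `t`-element set `S`, the number of `m`-tuples `(f₁, …, f_m)`
of functions `S → V` (where `V` is the set of even-weight vectors of `𝔽₂^t`, so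
`|V| = 2^{t-1}`) such that each image `fᵢ(S)` is an independent set of the graph `G₀`
(distinct `u, v` adjacent iff `u ⬝ v = 1`) is at most `2^{(-3m/8 + ε) t²} · |V|^{m t}`. -/
theorem count_tuples_with_independent_images (m : ℕ) (ε : ℝ) (hε : 0 < ε) :
    ∃ t₀ : ℕ, ∀ t : ℕ, t₀ ≤ t → Even t →
      ∀ (S : Type) [Fintype S], Fintype.card S = t →
        (Nat.card
            {f : Fin m → S → {v : Fin t → ZMod 2 //
                Even (Finset.univ.filter (fun i => v i ≠ 0)).card} //
              ∀ i : Fin m, ∀ x y : S, f i x ≠ f i y →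
                ∑ k, (f i x : Fin t → ZMod 2) k * (f i y : Fin t → ZMod 2) k ≠ 1} : ℝ)
          ≤ (2 : ℝ) ^ ((-(3 * m : ℝ) / 8 + ε) * t ^ 2) *
              ((2 : ℝ) ^ ((t : ℝ) - 1)) ^ (m * t) := by
  obtain ⟨t₀, h⟩ := count_tuples_with_independent_images_general m ε hε
  exact ⟨t₀, fun t ht _ => h t ht⟩
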